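/- arXiv:2412.13936 — 4 statements merged into one kernel-verified Lean document; each statement's English description precedes it below -/
import Mathlib

section
/- Let G be a group, φ : G → ℤ a group homomorphism, and a ∈ G an element with φ(a) ≠ 0 such that the cyclic subgroup ⟨a⟩ generated by a is normal in G. Then a lies in the center of G (and hence ⟨a⟩ is central). -/
/-- If `φ : G → ℤ` is a group homomorphism and `a ∈ G` satisfies `φ a ≠ 0`
(written multiplicatively: `φ a ≠ 1` in `Multiplicative ℤ`), and the cyclic
subgroup `⟨a⟩` generated by `a` is normal in `G`, then `a` is central. -/
theorem mem_center_of_zpowers_normal {G : Type*} [Group G]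
    (φ : G →* Multiplicative ℤ) (a : G) (hφ : φ a ≠ 1)
    (hnorm : (Subgroup.zpowers a).Normal) :
    a ∈ Subgroup.center G := by
  rw [Subgroup.mem_center_iff]
  intro g
  obtain ⟨n, hn⟩ := Subgroup.mem_zpowers_iff.mp
    (hnorm.conj_mem a (Subgroup.mem_zpowers a) g)
  have h1 : φ a ^ n = φ a := by
    rw [← map_zpow, hn, map_mul, map_mul, map_inv, mul_comm (φ g), mul_inv_cancel_right]
  have h2 : n * (φ a).toAdd = (φ a).toAdd := by
    have h := congrArg Multiplicative.toAdd h1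
    rwa [toAdd_zpow, smul_eq_mul] at h
  have h3 : (φ a).toAdd ≠ 0 := fun h => hφ (toAdd_eq_zero.mp h)
  have h4 : n = 1 := by
    apply mul_right_cancel₀ h3
    rw [h2, one_mul]
  rw [h4, zpow_one] at hn
  exact (eq_mul_inv_iff_mul_eq.mp hn).symm
end

section
/- Every cyclic normal subgroup of the Artin group A_{E₈} is central. -/
/-- The defining relations of the (small-type) Artin group of a simple graph `G`:
braid relations `aᵢaⱼaᵢ = aⱼaᵢaⱼ` for adjacent vertices, and commutation relations
`aᵢaⱼ = aⱼaᵢ` for distinct non-adjacent vertices. -/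
def artinRels {V : Type*} (G : SimpleGraph V) : Set (FreeGroup V) :=
  {r | ∃ i j : V,
    (G.Adj i j ∧
      r = FreeGroup.of i * FreeGroup.of j * FreeGroup.of i *
        (FreeGroup.of j * FreeGroup.of i * FreeGroup.of j)⁻¹) ∨
    (i ≠ j ∧ ¬ G.Adj i j ∧
      r = FreeGroup.of i * FreeGroup.of j * (FreeGroup.of j * FreeGroup.of i)⁻¹)}

/-- The (small-type) Artin group of a simple graph. -/
abbrev ArtinGroup {V : Type*} (G : SimpleGraph V) : Type _ := PresentedGroup (artinRels G)

/-- The `E₈` Dynkin diagram, as a simple graph on vertices `v₁, …, v₈`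
(encoded as `Fin 8`, with vertex `vₖ` corresponding to `k - 1 : Fin 8`), with
edges `{v₁,v₃}, {v₃,v₄}, {v₄,v₅}, {v₅,v₆}, {v₆,v₇}, {v₇,v₈}, {v₂,v₄}`. -/
def E8Graph : SimpleGraph (Fin 8) :=
  SimpleGraph.fromRel (fun i j =>
    ((i : ℕ) + 1, (j : ℕ) + 1) ∈
      ({(1, 3), (3, 4), (4, 5), (5, 6), (6, 7), (7, 8), (2, 4)} : Set (ℕ × ℕ)))

namespace ArtinE8Proof

open PresentedMonoid

/-- The defining relations of the positive Artin monoid. -/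
inductive MRel {V : Type} (G : SimpleGraph V) : FreeMonoid V → FreeMonoid V → Prop
  | braid (i j : V) (h : G.Adj i j) :
      MRel G (FreeMonoid.of i * FreeMonoid.of j * FreeMonoid.of i)
        (FreeMonoid.of j * FreeMonoid.of i * FreeMonoid.of j)
  | comm (i j : V) (hne : i ≠ j) (h : ¬ G.Adj i j) :
      MRel G (FreeMonoid.of i * FreeMonoid.of j) (FreeMonoid.of j * FreeMonoid.of i)

/-- The positive Artin monoid. -/
abbrev AM {V : Type} (G : SimpleGraph V) : Type := PresentedMonoid (MRel G)

variable {V : Type} {G : SimpleGraph V}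

/-- The generators of the positive monoid. -/
def g (i : V) : AM G := PresentedMonoid.of (MRel G) i

theorem g_braid {i j : V} (h : G.Adj i j) (x : AM G) :
    g i * (g j * (g i * x)) = g j * (g i * (g j * x)) := by
  have := mk_eq_mk_of_rel (MRel.braid i j h)
  simp only [map_mul] at this
  change g i * g j * g i = g j * g i * g j at this
  simp only [← mul_assoc, this]

theorem g_comm {i j : V} (hne : i ≠ j) (h : ¬ G.Adj i j) (x : AM G) :
    g i * (g j * x) = g j * (g i * x) := by
  have := mk_eq_mk_of_rel (MRel.comm i j hne h)
  simp only [map_mul] at this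
  change g i * g j = g j * g i at this
  simp only [← mul_assoc, this]

/-- The length homomorphism. -/
def len : AM G →* Multiplicative ℕ :=
  PresentedMonoid.lift (fun _ => Multiplicative.ofAdd 1) (by
    intro a b h
    cases h <;> rfl)

/-- The length function. -/
def L (x : AM G) : ℕ := (len x).toAdd

theorem L_mul (x y : AM G) : L (x * y) = L x + L y := by simp [L]

theorem L_g (i : V) : L (g i : AM G) = 1 := rfl

theorem L_g_mul (i : V) (x : AM G) : L (g i * x) = L x + 1 := by
  rw [L_mul, L_g, add_comm]

theorem L_mk (w : FreeMonoid V) : L (mk (MRel G) w) = w.length := by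
  induction w using FreeMonoid.inductionOn' with
  | one => rfl
  | of_mul a w ih =>
    rw [map_mul, L_mul, ih, FreeMonoid.length_mul, FreeMonoid.length_of]
    rfl

/-- Garside's divisibility conclusion. -/
def C (s : V) (u : AM G) (r : V) (z : AM G) : Prop :=
  (s = r ∧ u = z) ∨
  (s ≠ r ∧ ¬ G.Adj s r ∧ ∃ v, u = g r * v ∧ z = g s * v) ∨
  (G.Adj s r ∧ ∃ v, u = g r * (g s * v) ∧ z = g s * (g r * v))

theorem C.symm {s r : V} {u z : AM G} (h : C s u r z) : C r z s u := by
  rcases h with ⟨h, h'⟩ | ⟨h, h', v, hu, hz⟩ | ⟨h, v, hu, hz⟩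
  · exact Or.inl ⟨h.symm, h'.symm⟩
  · exact Or.inr (Or.inl ⟨h.symm, fun k => h' k.symm, v, hz, hu⟩)
  · exact Or.inr (Or.inr ⟨h.symm, v, hz, hu⟩)

theorem C.eq {s : V} {u z : AM G} (h : C s u s z) : u = z := by
  rcases h with ⟨_, h'⟩ | ⟨h, _⟩ | ⟨h, _⟩
  · exact h'
  · exact absurd rfl h
  · exact absurd h G.irrefl

theorem C.comm {s r : V} {u z : AM G} (h : C s u r z) (hne : s ≠ r) (hn : ¬ G.Adj s r) :
    ∃ v, u = g r * v ∧ z = g s * v := by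
  rcases h with ⟨h', _⟩ | ⟨_, _, h⟩ | ⟨h, _⟩
  · exact absurd h' hne
  · exact h
  · exact absurd h hn

theorem C.adj {s r : V} {u z : AM G} (h : C s u r z) (hn : G.Adj s r) :
    ∃ v, u = g r * (g s * v) ∧ z = g s * (g r * v) := by
  rcases h with ⟨h', _⟩ | ⟨_, h', _⟩ | ⟨_, h⟩
  · subst h'; exact absurd hn G.irrefl
  · exact absurd hn h'
  · exact h

theorem C.mul_right {s r : V} {u z x y : AM G} (h : C s u r z) (hxy : x = y) :
    C s (u * x) r (z * y) := by
  subst hxy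
  rcases h with ⟨h, h'⟩ | ⟨h, h', v, hu, hz⟩ | ⟨h, v, hu, hz⟩
  · exact Or.inl ⟨h, by rw [h']⟩
  · exact Or.inr (Or.inl ⟨h, h', v * x, by rw [hu, mul_assoc], by rw [hz, mul_assoc]⟩)
  · exact Or.inr (Or.inr ⟨h, v * x, by simp only [hu, mul_assoc], by simp only [hz, mul_assoc]⟩)

/-- Inductive hypothesis: Garside's lemma for lengths below `N`. -/
def IH (G : SimpleGraph V) (N : ℕ) : Prop :=
  ∀ (s r : V) (a b : AM G), L a < N → g s * a = g r * b → C s a r b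

theorem C.L_eq {s r : V} {u z : AM G} (h : C s u r z) : L u = L z := by
  rcases h with ⟨_, h'⟩ | ⟨h, h', v, hu, hz⟩ | ⟨h, v, hu, hz⟩
  · rw [h']
  · rw [hu, hz, L_g_mul, L_g_mul]
  · simp only [hu, hz, L_g_mul]

/-- mixed case -/
theorem C.trans_mixed {N : ℕ} (ih : IH G N)
    {s t r : V} {u w z : AM G} (hN : L w ≤ N) (hst : s ≠ t) (hst' : ¬ G.Adj s t)
    (htr : G.Adj t r) (h1 : C s u t w) (h2 : C t w r z) : C s u r z := by
  obtain ⟨v1, rfl, hw⟩ := h1.comm hst hst'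
  obtain ⟨v2, hw2, rfl⟩ := h2.adj htr
  have e1 := hw.symm.trans hw2
  have l1 := congrArg L hw
  have l2 := congrArg L hw2
  simp only [L_g_mul] at l1 l2
  have cst := g_comm (G := G) hst hst'
  have btr := g_braid (G := G) htr
  have hsr : s ≠ r := by rintro rfl; exact hst' htr.symm
  by_cases hsr' : G.Adj s r
  · obtain ⟨q, rfl, k2⟩ := (ih s r _ _ (by omega) e1).adj hsr'
    obtain ⟨q', rfl, k3⟩ := (ih t s _ _ (by omega) k2).comm hst.symm (fun h => hst' h.symm)
    simp only [L_g_mul] at l1 l2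
    obtain ⟨p, rfl, rfl⟩ := (ih r t _ _ (by omega) k3).adj htr.symm
    have bsr := g_braid (G := G) hsr'
    refine Or.inr (Or.inr ⟨hsr', g t * (g r * (g s * p)), ?_, ?_⟩)
    · rw [cst, btr, ← bsr, ← cst]
    · rw [← bsr, ← cst, cst p, btr]
  · obtain ⟨q, rfl, k2⟩ := (ih s r _ _ (by omega) e1).comm hsr hsr'
    obtain ⟨q', rfl, rfl⟩ := (ih t s _ _ (by omega) k2).comm hst.symm (fun h => hst' h.symm)
    have csr := g_comm (G := G) hsr hsr'
    refine Or.inr (Or.inl ⟨hsr, hsr', g t * (g r * q'), ?_, ?_⟩)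
    · rw [btr]
    · rw [← csr, ← cst]

theorem C.trans (htri : ∀ a b c, G.Adj a b → G.Adj b c → ¬ G.Adj a c) {N : ℕ} (ih : IH G N)
    {s t r : V} {u w z : AM G} (hN : L w ≤ N)
    (h1 : C s u t w) (h2 : C t w r z) : C s u r z := by
  by_cases hst : s = t
  · subst hst; rw [h1.eq]; exact h2
  by_cases htr : t = r
  · subst htr; rw [← h2.eq]; exact h1
  by_cases hst' : G.Adj s t <;> by_cases htr' : G.Adj t r
  · obtain ⟨v1, rfl, hw⟩ := h1.adj hst'
    obtain ⟨v2, hw2, rfl⟩ := h2.adj htr'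
    have e1 := hw.symm.trans hw2
    have l1 := congrArg L hw
    have l2 := congrArg L hw2
    simp only [L_g_mul] at l1 l2
    have bst := g_braid (G := G) hst'
    have btr := g_braid (G := G) htr'
    by_cases hsr : s = r
    · subst hsr
      have e2 := (ih _ _ _ _ (by rw [L_g_mul]; omega) e1).eq
      have e3 := (ih _ _ _ _ (by omega) e2).eq
      rw [e3]; exact Or.inl ⟨rfl, rfl⟩
    · have hsr' : ¬ G.Adj s r := htri _ _ _ hst' htr'
      obtain ⟨x, k1, k2⟩ := (ih s r _ _ (by rw [L_g_mul]; omega) e1).comm hsr hsr'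
      obtain ⟨y, rfl, rfl⟩ := (ih t r _ _ (by omega) k1).adj htr'
      obtain ⟨y', rfl, k3⟩ := (ih t s _ _ (by omega) k2).adj hst'.symm
      simp only [L_g_mul] at l1 l2
      have k4 := (ih _ _ _ _ (by rw [L_g_mul]; omega) k3).eq
      obtain ⟨q, rfl, rfl⟩ := (ih r s _ _ (by omega) k4).comm (Ne.symm hsr) (fun h => hsr' h.symm)
      have csr := g_comm (G := G) hsr hsr'
      refine Or.inr (Or.inl ⟨hsr, hsr', g t * (g r * (g s * (g t * q))), ?_, ?_⟩)
      · rw [csr, bst, btr]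
      · rw [← csr, ← btr, ← bst, csr]
  · exact (C.trans_mixed ih hN (Ne.symm htr) (fun h => htr' h.symm) hst'.symm
      h2.symm h1.symm).symm
  · exact C.trans_mixed ih hN hst hst' htr' h1 h2
  · obtain ⟨v1, rfl, hw⟩ := h1.comm hst hst'
    obtain ⟨v2, hw2, rfl⟩ := h2.comm htr htr'
    have e1 := hw.symm.trans hw2
    have l1 := congrArg L hw
    simp only [L_g_mul] at l1
    have cst := g_comm (G := G) hst hst'
    have ctr := g_comm (G := G) htr htr'
    rcases ih s r _ _ (by omega) e1 with ⟨h, h'⟩ | ⟨h, h', v, rfl, rfl⟩ | ⟨h, v, rfl, rfl⟩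
    · exact Or.inl ⟨h, by rw [h']⟩
    · exact Or.inr (Or.inl ⟨h, h', g t * v, by rw [ctr], by rw [cst]⟩)
    · exact Or.inr (Or.inr ⟨h, g t * v, by rw [ctr, ← cst], by rw [← cst, ctr]⟩)

theorem mk_of_mul (s : V) (u : FreeMonoid V) :
    mk (MRel G) (FreeMonoid.of s * u) = g s * mk (MRel G) u := rfl

theorem garside_aux (htri : ∀ a b c, G.Adj a b → G.Adj b c → ¬ G.Adj a c) {N : ℕ} (ih : IH G N)
    {a b : FreeMonoid V} (h : ConGen.Rel (MRel G) a b) :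
    ∀ (s r : V) (u z : FreeMonoid V), u.length ≤ N → a = FreeMonoid.of s * u →
      b = FreeMonoid.of r * z → C (G := G) s (mk (MRel G) u) r (mk (MRel G) z) := by
  have lenEq : ∀ {a b : FreeMonoid V}, ConGen.Rel (MRel G) a b → a.length = b.length := by
    intro a b h
    rw [← L_mk (G := G), ← L_mk (G := G), mk_eq_mk_iff.2 h]
  induction h with
  | of x y h =>
    intro s r u z _ hx hy
    cases h with
    | braid i j h =>
      obtain ⟨rfl, rfl⟩ := List.cons.inj hx
      obtain ⟨rfl, rfl⟩ := List.cons.inj hy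
      exact Or.inr (Or.inr ⟨h, 1, rfl, rfl⟩)
    | comm i j hne h =>
      obtain ⟨rfl, rfl⟩ := List.cons.inj hx
      obtain ⟨rfl, rfl⟩ := List.cons.inj hy
      exact Or.inr (Or.inl ⟨hne, h, 1, rfl, rfl⟩)
  | refl x =>
    intro s r u z _ hx hy
    obtain ⟨rfl, rfl⟩ := List.cons.inj (hx.symm.trans hy)
    exact Or.inl ⟨rfl, rfl⟩
  | @symm x y h k =>
    intro s r u z hl hx hy
    have := lenEq h
    rw [hx, hy, FreeMonoid.length_mul, FreeMonoid.length_mul, FreeMonoid.length_of,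
      FreeMonoid.length_of] at this
    exact (k r s z u (by omega) hy hx).symm
  | @trans x y z' h1 h2 k1 k2 =>
    intro s r u z hl hx hy
    have l1 := lenEq h1
    cases y using FreeMonoid.casesOn with
    | one => rw [hx, FreeMonoid.length_mul, FreeMonoid.length_of, FreeMonoid.length_one] at l1; omega
    | of_mul t w =>
      rw [hx, FreeMonoid.length_mul, FreeMonoid.length_mul, FreeMonoid.length_of,
        FreeMonoid.length_of] at l1
      exact C.trans htri ih (w := mk (MRel G) w) (by rw [L_mk]; omega)
        (k1 s t u w hl hx rfl) (k2 t r w z (by omega) rfl hy)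
  | @mul w x y z' h1 h2 k1 k2 =>
    intro s r u z hl hx hy
    have l1 := lenEq h1
    cases w using FreeMonoid.casesOn with
    | one =>
      have : x = 1 := FreeMonoid.length_eq_zero.1 (by rw [← l1, FreeMonoid.length_one])
      subst this
      rw [one_mul] at hx hy
      exact k2 s r u z hl hx hy
    | of_mul s' w =>
      cases x using FreeMonoid.casesOn with
      | one => rw [FreeMonoid.length_mul, FreeMonoid.length_of, FreeMonoid.length_one] at l1; omega
      | of_mul r' x =>
        rw [mul_assoc] at hx hy
        obtain ⟨rfl, rfl⟩ := List.cons.inj hx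
        obtain ⟨rfl, rfl⟩ := List.cons.inj hy
        have := k1 s' r' w x (by
          have : (w * y).length ≤ N := hl
          rw [FreeMonoid.length_mul] at this; omega) rfl rfl
        exact C.mul_right this (mk_eq_mk_iff.2 h2)

theorem garside (htri : ∀ a b c, G.Adj a b → G.Adj b c → ¬ G.Adj a c) (N : ℕ) : IH G N := by
  induction N with
  | zero => intro s r a b h; omega
  | succ N ih =>
    intro s r a b h e
    obtain ⟨u, rfl⟩ := surjective_mk a
    obtain ⟨z, rfl⟩ := surjective_mk b
    rw [← mk_of_mul, ← mk_of_mul, mk_eq_mk_iff] at e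
    rw [L_mk] at h
    exact garside_aux htri ih e s r u z (by omega) rfl rfl

theorem pow_braid {s r : V} (h : G.Adj s r) (k : ℕ) (w : AM G) :
    g s ^ k * (g r * (g s * w)) = g r * (g s * (g r ^ k * w)) := by
  induction k with
  | zero => simp
  | succ k ih =>
    rw [pow_succ', mul_assoc, ih, g_braid h, pow_succ', mul_assoc]

theorem pow_comm' {s r : V} (hne : s ≠ r) (h : ¬ G.Adj s r) (k : ℕ) (w : AM G) :
    g s ^ k * (g r * w) = g r * (g s ^ k * w) := by
  induction k with
  | zero => simp
  | succ k ih =>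
    rw [pow_succ', mul_assoc, ih, g_comm hne h, mul_assoc]

section consequences

theorem garside' (htri : ∀ a b c, G.Adj a b → G.Adj b c → ¬ G.Adj a c)
    {s r : V} {a b : AM G} (e : g s * a = g r * b) : C s a r b :=
  garside htri (L a + 1) s r a b (by omega) e

theorem cancel (htri : ∀ a b c, G.Adj a b → G.Adj b c → ¬ G.Adj a c)
    (x a b : AM G) (e : x * a = x * b) : a = b := by
  obtain ⟨w, rfl⟩ := surjective_mk x
  induction w using FreeMonoid.inductionOn' with
  | one => simpa using e
  | of_mul s w ih =>
    rw [mk_of_mul, mul_assoc, mul_assoc] at e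
    exact ih (garside' htri e).eq

theorem pow_adj (htri : ∀ a b c, G.Adj a b → G.Adj b c → ¬ G.Adj a c)
    {s r : V} (h : G.Adj s r) (k : ℕ) {w z : AM G}
    (e : g s ^ (k + 1) * w = g r * z) : ∃ v, w = g r * (g s * v) := by
  induction k generalizing z with
  | zero =>
    rw [zero_add, pow_one] at e
    obtain ⟨v, h1, _⟩ := (garside' htri e).adj h
    exact ⟨v, h1⟩
  | succ k ih =>
    rw [pow_succ', mul_assoc] at e
    obtain ⟨v, h1, _⟩ := (garside' htri e).adj h
    exact ih h1

/-- If `s^k w = w t^k` with `k ≥ 1` then `s w = w t`. -/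
theorem root (htri : ∀ a b c, G.Adj a b → G.Adj b c → ¬ G.Adj a c)
    (k n : ℕ) : ∀ (s t : V) (w : AM G), L w = n →
    g s ^ (k + 1) * w = w * g t ^ (k + 1) → g s * w = w * g t := by
  induction n using Nat.strong_induction_on with
  | _ n ih =>
    intro s t w hn e
    obtain ⟨w, rfl⟩ := surjective_mk w
    cases w using FreeMonoid.casesOn with
    | one =>
      rw [map_one, mul_one, one_mul] at *
      by_cases hst : s = t
      · rw [hst]
      rw [pow_succ', pow_succ'] at e
      rcases garside' htri e with ⟨h, _⟩ | ⟨h, h', v, hu, hz⟩ | ⟨h, v, hu, hz⟩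
      · exact absurd h hst
      · exfalso
        have : ∀ k, ∀ v : AM G, g s ^ k ≠ g t * v := by
          intro k
          induction k with
          | zero =>
            intro v hv
            have := congrArg L hv
            rw [L_g_mul, pow_zero] at this
            have h0 : L (1 : AM G) = 0 := rfl
            omega
          | succ k ih =>
            intro v hv
            rw [pow_succ'] at hv
            obtain ⟨v', h1, _⟩ := (garside' htri hv).comm h h'
            exact ih _ h1
        exact this _ _ hu
      · exfalso
        have e' : g s ^ (k + 1) * 1 = g t * (g t ^ k : AM G) := by
          rw [mul_one, pow_succ', e]
        obtain ⟨v', h1⟩ := pow_adj htri h k e'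
        have := congrArg L h1
        rw [L_g_mul] at this
        have h0 : L (1 : AM G) = 0 := rfl
        omega
    | of_mul r w =>
      rw [mk_of_mul] at e hn ⊢
      rw [L_g_mul] at hn
      by_cases hsr : s = r
      · subst hsr
        rw [← mul_assoc, ← pow_succ, pow_succ', mul_assoc, mul_assoc] at e
        rw [mul_assoc, ← ih _ (by omega) s t _ rfl (cancel htri _ _ _ e)]
      by_cases hsr' : G.Adj s r
      · rw [mul_assoc] at e
        obtain ⟨v, hv⟩ := pow_adj htri hsr' k e
        have hv := cancel htri _ _ _ hv
        rw [hv] at e hn ⊢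
        rw [L_g_mul] at hn
        rw [pow_braid hsr', mul_assoc] at e
        have := ih _ (by omega) r t v rfl (cancel htri _ _ _ (cancel htri _ _ _ e))
        rw [g_braid hsr', this]
        simp only [mul_assoc]
      · rw [pow_comm' hsr hsr', mul_assoc] at e
        have := ih _ (by omega) s t _ rfl (cancel htri _ _ _ e)
        rw [g_comm hsr hsr', this, mul_assoc]

end consequences

section embedding

/-- The natural map from the positive monoid to the Artin group. -/
def phi (G : SimpleGraph V) : AM G →* ArtinGroup G :=
  PresentedMonoid.lift (fun i => PresentedGroup.of i) (by
    intro a b h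
    cases h with
    | braid i j h =>
      simp only [map_mul, FreeMonoid.lift_eval_of]
      have : PresentedGroup.mk (artinRels G) _ = 1 :=
        (PresentedGroup.one_of_mem (rels := artinRels G) ⟨i, j, Or.inl ⟨h, rfl⟩⟩)
      rw [map_mul, map_inv, mul_inv_eq_one, map_mul, map_mul, map_mul, map_mul] at this
      exact this
    | comm i j hne h =>
      simp only [map_mul, FreeMonoid.lift_eval_of]
      have : PresentedGroup.mk (artinRels G) _ = 1 :=
        (PresentedGroup.one_of_mem (rels := artinRels G) ⟨i, j, Or.inr ⟨hne, h, rfl⟩⟩)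
      rw [map_mul, map_inv, mul_inv_eq_one, map_mul, map_mul] at this
      exact this)

theorem phi_g (i : V) : phi G (g i) = PresentedGroup.of i := rfl

theorem powers_comm {D : AM G} (hc : ∀ x, D * x = x * D) (s : Submonoid.powers D) (x : AM G) :
    (s : AM G) * x = x * s := by
  obtain ⟨_, n, rfl⟩ := s
  exact (Commute.pow_left (show Commute D x from hc x) n).eq

/-- The Ore structure on the powers of a central element. -/
@[reducible]
def oreInst {D : AM G} (hc : ∀ x, D * x = x * D) : OreLocalization.OreSet (Submonoid.powers D) where
  ore_right_cancel r1 r2 s h := ⟨s, by rw [powers_comm hc, powers_comm hc, h]⟩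
  oreNum r _ := r
  oreDenom _ s := s
  ore_eq r s := powers_comm hc s r

theorem phi_injective (htri : ∀ a b c, G.Adj a b → G.Adj b c → ¬ G.Adj a c)
    {D : AM G} (hc : ∀ x, D * x = x * D) (hd : ∀ i, ∃ q, D = g i * q) :
    Function.Injective (phi G) := by
  let _ := oreInst hc
  let N : AM G →* OreLocalization (Submonoid.powers D) (AM G) := OreLocalization.numeratorHom
  have hN : Function.Injective N := by
    intro a b h
    change a /ₒ (1 : Submonoid.powers D) = b /ₒ (1 : Submonoid.powers D) at h
    rw [OreLocalization.oreDiv_eq_iff] at h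
    obtain ⟨u, v, h1, h2⟩ := h
    simp only [Submonoid.coe_one, mul_one] at h2
    subst h2
    exact (cancel htri _ _ _ h1).symm
  have hu : ∀ i, IsUnit (N (g i)) := by
    intro i
    obtain ⟨q, hq⟩ := hd i
    have hq' : q * g i = D := by
      apply cancel htri (g i)
      rw [← mul_assoc, ← hq, hc]
    have hcm : Commute (N (g i)) (N q) := by
      change _ * _ = _ * _
      rw [← map_mul, ← map_mul, hq', ← hq]
    have hD : IsUnit (N (g i) * N q) := by
      rw [← map_mul, ← hq]
      exact OreLocalization.numerator_isUnit (⟨D, Submonoid.mem_powers D⟩ : Submonoid.powers D)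
    exact (hcm.isUnit_mul_iff.1 hD).1
  choose u hu using hu
  have hrel : ∀ r ∈ artinRels G, FreeGroup.lift u r = 1 := by
    rintro r ⟨i, j, ⟨h, rfl⟩ | ⟨hne, h, rfl⟩⟩
    · simp only [map_mul, map_inv, FreeGroup.lift_apply_of, mul_inv_eq_one]
      ext
      simp only [Units.val_mul, hu, ← map_mul]
      congr 1
      simpa [mul_assoc] using g_braid h 1
    · simp only [map_mul, map_inv, FreeGroup.lift_apply_of, mul_inv_eq_one]
      ext
      simp only [Units.val_mul, hu, ← map_mul]
      congr 1
      simpa [mul_assoc] using g_comm hne h 1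
  let psi : ArtinGroup G →* (OreLocalization (Submonoid.powers D) (AM G))ˣ :=
    PresentedGroup.toGroup hrel
  have hcomp : ((Units.coeHom _).comp psi).comp (phi G) = N := by
    apply PresentedMonoid.ext
    intro i
    change ((psi (phi G (g i)) : (OreLocalization (Submonoid.powers D) (AM G))ˣ) :
      OreLocalization (Submonoid.powers D) (AM G)) = N (g i)
    rw [phi_g, ← hu]
    congr 1
    exact PresentedGroup.toGroup.of hrel
  intro a b h
  apply hN
  rw [← hcomp]
  simp only [MonoidHom.comp_apply, h]

theorem of_comm_all {x : ArtinGroup G} (h : ∀ i, PresentedGroup.of i * x = x * PresentedGroup.of i)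
    (y : ArtinGroup G) : y * x = x * y := by
  have := PresentedGroup.generated_by (artinRels G) (Subgroup.centralizer {x})
    (fun i => by
      rw [Subgroup.mem_centralizer_singleton_iff]
      exact h i) y
  rw [Subgroup.mem_centralizer_singleton_iff] at this
  exact this

theorem exists_pos {D : AM G} (hc : ∀ x, D * x = x * D)
    (hd : ∀ i, ∃ q, D = g i * q) (a : ArtinGroup G) :
    ∃ (m : ℕ) (p : AM G), phi G D ^ m * a = phi G p := by
  have hcc : ∀ y : ArtinGroup G, y * phi G D = phi G D * y :=
    of_comm_all (fun i => by rw [← phi_g, ← map_mul, ← map_mul, hc])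
  obtain ⟨w, rfl⟩ := PresentedGroup.mk_surjective _ a
  induction w using FreeGroup.induction_on with
  | C1 => exact ⟨0, 1, by simp⟩
  | of i => exact ⟨0, g i, by rw [pow_zero, one_mul]; rfl⟩
  | inv_of i _ =>
    obtain ⟨q, hq⟩ := hd i
    refine ⟨1, q, ?_⟩
    rw [pow_one, map_inv, mul_inv_eq_iff_eq_mul]
    change _ = phi G q * phi G (g i)
    apply mul_left_cancel (a := phi G (g i))
    rw [← mul_assoc, ← map_mul _ _ q, ← hq, hcc]
  | mul x y hx hy =>
    obtain ⟨m, p, h1⟩ := hx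
    obtain ⟨n, q, h2⟩ := hy
    refine ⟨m + n, p * q, ?_⟩
    rw [map_mul, map_mul, ← h1, ← h2, pow_add]
    have : ∀ y : ArtinGroup G, y * phi G D ^ n = phi G D ^ n * y :=
      fun y => (Commute.pow_right (show Commute y (phi G D) from hcc y) n).eq
    simp only [mul_assoc]
    rw [← mul_assoc _ (phi G D ^ n) (PresentedGroup.mk _ y), this (PresentedGroup.mk _ x), mul_assoc]

theorem main (htri : ∀ a b c, G.Adj a b → G.Adj b c → ¬ G.Adj a c)
    {D : AM G} (hc : ∀ x, D * x = x * D) (hd : ∀ i, ∃ q, D = g i * q)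
    (H : Subgroup (ArtinGroup G)) (hnorm : H.Normal)
    (hcyc : ∃ a : ArtinGroup G, H = Subgroup.zpowers a) :
    H ≤ Subgroup.center (ArtinGroup G) := by
  have hcy : IsCyclic H := by
    obtain ⟨a, rfl⟩ := hcyc
    infer_instance
  have hfin : Finite (MulAut H) := by
    have : Finite (ZMod (Nat.card H))ˣ := by
      generalize Nat.card H = n
      cases n with
      | zero => exact inferInstanceAs (Finite ℤˣ)
      | succ n => infer_instance
    exact Finite.of_equiv _ (IsCyclic.mulAutMulEquiv H).symm.toEquiv
  intro a ha
  rw [Subgroup.mem_center_iff]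
  apply of_comm_all
  intro i
  obtain ⟨j, hj, hj'⟩ := (isOfFinOrder_of_finite
    (MulAut.conjNormal (PresentedGroup.of i : ArtinGroup G) : MulAut H)).exists_pow_eq_one
  obtain ⟨k, rfl⟩ : ∃ k, j = k + 1 := ⟨j - 1, by omega⟩
  rw [← map_pow] at hj'
  have h1 := congrArg (fun f : MulAut H => ((f ⟨a, ha⟩ : H) : ArtinGroup G)) hj'
  simp only [MulAut.conjNormal_apply, MulAut.one_apply] at h1
  rw [mul_inv_eq_iff_eq_mul] at h1
  obtain ⟨m, p, hp⟩ := exists_pos hc hd a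
  have hcc : ∀ y : ArtinGroup G, y * phi G D = phi G D * y :=
    of_comm_all (fun i => by rw [← phi_g, ← map_mul, ← map_mul, hc])
  have hcm : ∀ y : ArtinGroup G, y * phi G D ^ m = phi G D ^ m * y :=
      fun y => (Commute.pow_right (show Commute y (phi G D) from hcc y) m).eq
  have h2 : g i ^ (k + 1) * p = p * g i ^ (k + 1) := by
    apply phi_injective htri hc hd
    rw [map_mul, map_mul, map_pow, ← hp, phi_g, ← mul_assoc, hcm, mul_assoc, h1, mul_assoc]
  have h3 := congrArg (phi G) (root htri k _ i i p rfl h2)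
  rw [map_mul, map_mul, phi_g, ← hp, ← mul_assoc, hcm, mul_assoc, mul_assoc] at h3
  exact mul_left_cancel h3

end embedding

section computation

/-- Boolean adjacency of the `E₈` diagram. -/
def ad (i j : Fin 8) : Bool :=
  match i.val, j.val with
  | 0, 2 => true | 2, 0 => true
  | 2, 3 => true | 3, 2 => true
  | 3, 4 => true | 4, 3 => true
  | 4, 5 => true | 5, 4 => true
  | 5, 6 => true | 6, 5 => true
  | 6, 7 => true | 7, 6 => true
  | 1, 3 => true | 3, 1 => true
  | _, _ => false

theorem ad_iff (i j : Fin 8) : E8Graph.Adj i j ↔ ad i j = true := by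
  rw [E8Graph, SimpleGraph.fromRel_adj]
  simp only [Set.mem_insert_iff, Set.mem_singleton_iff, Prod.mk.injEq]
  revert i j
  decide

theorem e8_tri : ∀ a b c, E8Graph.Adj a b → E8Graph.Adj b c → ¬ E8Graph.Adj a c := by
  intro a b c
  rw [ad_iff, ad_iff, ad_iff]
  revert a b c
  decide

/-- Left division of a positive word by a letter (with fuel). -/
def ldiv : ℕ → Fin 8 → List (Fin 8) → Option (List (Fin 8))
  | 0, _, _ => none
  | _ + 1, _, [] => none
  | n + 1, s, r :: w =>
    if s = r then some w
    else if ad s r = true then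
      match ldiv n s w with
      | none => none
      | some q =>
        match ldiv n r q with
        | none => none
        | some q' => some (r :: s :: q')
    else
      match ldiv n s w with
      | none => none
      | some q => some (r :: q)

/-- Equality test of positive words. -/
def weq (n : ℕ) : List (Fin 8) → List (Fin 8) → Bool
  | [], w => w.isEmpty
  | s :: v, w =>
    match ldiv n s w with
    | none => false
    | some q => weq n v q

/-- Evaluation of a word in the monoid. -/
def ev (w : List (Fin 8)) : AM E8Graph := (w.map g).prod

theorem ev_cons (s : Fin 8) (w : List (Fin 8)) : ev (s :: w) = g s * ev w := by
  simp [ev]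

theorem ldiv_sound (n : ℕ) : ∀ (s : Fin 8) (w q : List (Fin 8)), ldiv n s w = some q →
    ev w = g s * ev q := by
  induction n with
  | zero => intro s w q h; simp [ldiv] at h
  | succ n ih =>
    intro s w q h
    cases w with
    | nil => simp [ldiv] at h
    | cons r w =>
      rw [ldiv] at h
      split_ifs at h with h1 h2
      · obtain rfl := Option.some.inj h
        rw [h1, ev_cons]
      · split at h
        · exact absurd h (by simp)
        · rename_i q1 hq1
          split at h
          · exact absurd h (by simp)
          · rename_i q2 hq2
            obtain rfl := Option.some.inj h
            rw [ev_cons, ev_cons, ev_cons, ih _ _ _ hq1, ih _ _ _ hq2,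
              g_braid ((ad_iff s r).2 h2)]
      · split at h
        · exact absurd h (by simp)
        · rename_i q1 hq1
          obtain rfl := Option.some.inj h
          rw [ev_cons, ev_cons, ih _ _ _ hq1, g_comm h1 (fun k => h2 ((ad_iff s r).1 k))]

theorem weq_sound (n : ℕ) (v : List (Fin 8)) : ∀ w, weq n v w = true → ev v = ev w := by
  induction v with
  | nil =>
    intro w h
    rw [weq, List.isEmpty_iff] at h
    rw [h]
  | cons s v ih =>
    intro w h
    rw [weq] at h
    split at h
    · exact absurd h (by simp)
    · rename_i q hq
      rw [ev_cons, ih _ h, ldiv_sound _ _ _ _ hq]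

/-- The Garside element, the 15th power of a Coxeter element. -/
def deltaWord : List (Fin 8) :=
  (List.replicate 15 [0, 1, 2, 3, 4, 5, 6, 7]).flatten

theorem delta_comm_gen : ∀ s : Fin 8,
    weq 130 (s :: deltaWord) (deltaWord ++ [s]) = true := by
  decide +kernel

theorem delta_div_gen : ∀ s : Fin 8, (ldiv 130 s deltaWord).isSome = true := by
  decide +kernel

theorem delta_comm (x : AM E8Graph) : ev deltaWord * x = x * ev deltaWord := by
  obtain ⟨w, rfl⟩ := surjective_mk x
  induction w using FreeMonoid.inductionOn' with
  | one => simp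
  | of_mul s w ih =>
    have h := weq_sound _ _ _ (delta_comm_gen s)
    have e : ev (deltaWord ++ [s]) = ev deltaWord * g s := by simp [ev]
    rw [ev_cons, e] at h
    rw [mk_of_mul, ← mul_assoc, ← h, mul_assoc, ih, mul_assoc]

theorem delta_div (s : Fin 8) : ∃ q, ev deltaWord = g s * q := by
  obtain ⟨q, hq⟩ := Option.isSome_iff_exists.1 (delta_div_gen s)
  exact ⟨ev q, ldiv_sound _ _ _ _ hq⟩

end computation

end ArtinE8Proof

/-- Every cyclic normal subgroup of the Artin group `A_{E₈}` is central. -/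
theorem cyclic_normal_subgroup_central_artinE8
    (H : Subgroup (ArtinGroup E8Graph)) (hnorm : H.Normal)
    (hcyc : ∃ a : ArtinGroup E8Graph, H = Subgroup.zpowers a) :
    H ≤ Subgroup.center (ArtinGroup E8Graph) := by
  exact ArtinE8Proof.main ArtinE8Proof.e8_tri ArtinE8Proof.delta_comm ArtinE8Proof.delta_div H hnorm hcyc
end

section
/- For every point p of the chamber C, the set 𝕌 is star-shaped with respect to the purely imaginary point i·p ∈ ℂⁿ; that is, for every z ∈ 𝕌 and every t ∈ [0,1], the point (1−t)·z + t·(i·p) lies in 𝕌. -/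
/-- Brieskorn's set `𝕌 = {x + iy : y ∈ C_x}` associated with a family of linear
functionals `α i` on `ℝⁿ`: the set of `z ∈ ℂⁿ` such that `α i (Im z) > 0` for
every `i` with `α i (Re z) = 0`. -/
def brieskornU {n : ℕ} {I : Type*} (α : I → ((Fin n → ℝ) →ₗ[ℝ] ℝ)) :
    Set (Fin n → ℂ) :=
  {z | ∀ i, α i (fun k => (z k).re) = 0 → 0 < α i (fun k => (z k).im)}

/-- For every point `p` of the chamber `C = {y : ∀ i, α i y > 0}`, the set `𝕌`
is star-shaped with respect to the purely imaginary point `i·p ∈ ℂⁿ`: for every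
`z ∈ 𝕌` and every `t ∈ [0,1]`, the point `(1−t)·z + t·(i·p)` lies in `𝕌`. -/
theorem brieskornU_starShaped
    {n : ℕ} (hn : 1 ≤ n) {I : Type*} [Fintype I]
    (α : I → ((Fin n → ℝ) →ₗ[ℝ] ℝ)) (hα : ∀ i, α i ≠ 0)
    (p : Fin n → ℝ) (hp : ∀ i, 0 < α i p) :
    ∀ z ∈ brieskornU α, ∀ t ∈ Set.Icc (0 : ℝ) 1,
      ((1 - t) • z + t • (fun k => Complex.I * (p k : ℂ))) ∈ brieskornU α := by
  intro z hz t ht i hi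
  obtain ⟨h0, h1⟩ := ht
  have hre : (fun k => (((1 - t) • z + t • (fun k => Complex.I * (p k : ℂ))) k).re)
      = (1 - t) • (fun k => (z k).re) := by
    funext k
    simp [Complex.real_smul, -Complex.coe_smul]
  have him : (fun k => (((1 - t) • z + t • (fun k => Complex.I * (p k : ℂ))) k).im)
      = (1 - t) • (fun k => (z k).im) + t • p := by
    funext k
    simp [Complex.real_smul, -Complex.coe_smul]
  rw [hre, map_smul, smul_eq_mul] at hi
  rw [him, map_add, map_smul, map_smul, smul_eq_mul, smul_eq_mul]
  rcases mul_eq_zero.mp hi with h | h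
  · have ht1 : t = 1 := by linarith
    subst ht1
    simpa using hp i
  · have hz' := hz i h
    have hpi := hp i
    rcases h0.eq_or_lt with h | h
    · subst h
      simpa using hz'
    · have := mul_nonneg (sub_nonneg.mpr h1) hz'.le
      have := mul_pos h hpi
      linarith
end

section
/- The set 𝕌 (being star-like with respect to any point of i·C) is a contractible topological space. -/
/-- The set `𝕌` (being star-like with respect to any point of `i·C`, where the
chamber `C = {y : ∀ i, α i y > 0}` is nonempty) is a contractible topological
space. -/
theorem brieskornU_contractible
    {n : ℕ} (hn : 1 ≤ n) {I : Type*} [Fintype I]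
    (α : I → ((Fin n → ℝ) →ₗ[ℝ] ℝ)) (hα : ∀ i, α i ≠ 0)
    (hC : ∃ y : Fin n → ℝ, ∀ i, 0 < α i y) :
    ContractibleSpace (brieskornU α) := by
  obtain ⟨y, hy⟩ := hC
  have hw : (fun k => (⟨0, y k⟩ : ℂ)) ∈ brieskornU α := fun i _ => hy i
  have hstar : StarConvex ℝ (fun k => (⟨0, y k⟩ : ℂ)) (brieskornU α) := by
    intro z hz a b ha hb hab i h0
    have hre : (fun k => ((a • (fun k => (⟨0, y k⟩ : ℂ)) + b • z) k).re)
        = b • (fun k => (z k).re) := by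
      funext k
      simp
    have him : (fun k => ((a • (fun k => (⟨0, y k⟩ : ℂ)) + b • z) k).im)
        = a • y + b • (fun k => (z k).im) := by
      funext k
      simp
    rw [hre, map_smul, smul_eq_mul] at h0
    rw [him, map_add, map_smul, map_smul, smul_eq_mul, smul_eq_mul]
    rcases mul_eq_zero.mp h0 with hb0 | hx
    · have ha1 : a = 1 := by linarith
      rw [hb0, ha1]
      simpa using hy i
    · have hz' := hz i hx
      have hyi := hy i
      rcases hb.eq_or_lt with hb0 | hbpos
      · have ha1 : a = 1 := by linarith
        rw [← hb0, ha1]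
        simpa using hyi
      · have h1 := mul_pos hbpos hz'
        have h2 := mul_nonneg ha hyi.le
        linarith
  exact hstar.contractibleSpace ⟨_, hw⟩
end
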